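/- Let H be a fixed connected planar graph with e(H) > |H|, and let m:ℕ→ℕ be such that d(n) := n − m(n) > 0 for all n and d(n) = ω(n^{|H|/e(H)}) as n→∞. Then the probability that P_{n,m(n)} contains a subgraph isomorphic to H tends to 0 as n→∞. -/

import Mathlib

/-!
Deleting the edges of a copy of `H` from a planar graph with `m` edges leaves a planar graph with
`m - e(H)` edges, and the copy has at most `n ^ |H|` possible positions. So it is enough to show
that the number of planar graphs with `k` edges grows with `k` by a factor of order `n - k`.

In a graph with `k` edges at most `k + 1` vertices are reachable from a given vertex `u`, so at
least `n - k - 1` edges at `u` join it to another component. Adding such an edge keeps the graph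
planar: `K₅` and `K₃,₃` are 2-connected, so the branch sets of a minor using the new edge all meet
the same side of it, and the part of the model on the other side can be contracted away. Double
counting the pairs of a graph with `k` edges and such an addition then gives
`|𝒫(n,k)| (n - k - 1) ≤ 2 |𝒫(n,k+1)|`.

With `e = e(H)` and `d = n - m`, iterating `e` times bounds the probability of containing `H` by
`2 ^ e * n ^ |H| / d ^ e = 2 ^ e * (d / n ^ (|H| / e)) ^ (-e)`, which tends to zero.
-/

open SimpleGraph Filter Asymptotics

/-- `H` is a minor of `G`: to each vertex of `H` we can assign a connected nonempty
branch set in `G`, pairwise disjoint, with an edge of `G` between the branch sets of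
any two adjacent vertices of `H`. -/
def IsMinor {α β : Type*} (H : SimpleGraph α) (G : SimpleGraph β) : Prop :=
  ∃ f : α → Set β,
    (∀ a, (G.induce (f a)).Connected) ∧
    (∀ a b, a ≠ b → Disjoint (f a) (f b)) ∧
    (∀ a b, H.Adj a b → ∃ u ∈ f a, ∃ v ∈ f b, G.Adj u v)

/-- A graph is planar iff it has neither a `K₅`-minor nor a `K₃,₃`-minor
(Wagner's theorem). -/
def IsPlanar {V : Type*} (G : SimpleGraph V) : Prop :=
  ¬ IsMinor (completeGraph (Fin 5)) G ∧
    ¬ IsMinor (completeBipartiteGraph (Fin 3) (Fin 3)) G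

/-- The number of edges of a graph. -/
noncomputable def edgeCount {V : Type*} (G : SimpleGraph V) : ℕ :=
  G.edgeSet.ncard

/-- The degree of a vertex. -/
noncomputable def vertexDegree {V : Type*} (G : SimpleGraph V) (v : V) : ℕ :=
  (G.neighborSet v).ncard

/-- `𝒫(n,m)`: the set of labelled planar graphs on `{1,…,n}` with exactly `m` edges. -/
def planarSet (n m : ℕ) : Set (SimpleGraph (Fin n)) :=
  {G | IsPlanar G ∧ edgeCount G = m}

/-- The probability that the uniform random planar graph `P_{n,m}` satisfies `P`. -/
noncomputable def planarProb (n m : ℕ) (P : SimpleGraph (Fin n) → Prop) : ℝ :=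
  ({G ∈ planarSet n m | P G}.ncard : ℝ) / ((planarSet n m).ncard : ℝ)

/-- The number of pendant edges (edges incident to a vertex of degree 1). -/
noncomputable def pendantCount {V : Type*} (G : SimpleGraph V) : ℕ :=
  {e ∈ G.edgeSet | ∃ v ∈ e, vertexDegree G v = 1}.ncard

/-- The set of addable non-edges of `G`: non-edges whose addition keeps the graph planar. -/
def addableSet {V : Type*} (G : SimpleGraph V) : Set (Sym2 V) :=
  {e | ¬ e.IsDiag ∧ e ∉ G.edgeSet ∧ IsPlanar (G ⊔ SimpleGraph.fromEdgeSet {e})}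

/-- `add(n,m)`: the minimum number of addable non-edges over all graphs in `𝒫(n,m)`. -/
noncomputable def addMin (n m : ℕ) : ℕ :=
  sInf ((fun G => (addableSet G).ncard) '' planarSet n m)

/-- `W` carries an induced order-preserving copy of `H` in `G`: the increasing bijection
from `{1,…,h}` to `W` is an isomorphism between `H` and the induced subgraph `G[W]`. -/
def IsOrderCopy {h n : ℕ} (H : SimpleGraph (Fin h)) (G : SimpleGraph (Fin n))
    (W : Finset (Fin n)) : Prop :=
  ∃ hW : W.card = h,
    ∀ i j : Fin h,
      H.Adj i j ↔ G.Adj ((W.orderIsoOfFin hW i : Fin n)) ((W.orderIsoOfFin hW j : Fin n))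

/-- `W` is the vertex set of a connected component of `G`. -/
def IsComponent {V : Type*} (G : SimpleGraph V) (W : Finset V) : Prop :=
  (G.induce (W : Set V)).Connected ∧ ∀ v ∈ W, ∀ u, G.Adj v u → u ∈ W

/-- The number of components of `G` admitting an order-preserving isomorphism to `H`. -/
noncomputable def numOrderComponents {h n : ℕ} (H : SimpleGraph (Fin h))
    (G : SimpleGraph (Fin n)) : ℕ :=
  {W : Finset (Fin n) | IsComponent G W ∧ IsOrderCopy H G W}.ncard

/-- The number of distinct cycles (as subgraphs, identified with their edge sets) of
length at most `k` in `S`. -/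
noncomputable def cycleCountLe {V : Type*} (S : SimpleGraph V) (k : ℕ) : ℕ :=
  {E : Set (Sym2 V) | ∃ (v : V) (c : S.Walk v v),
    c.IsCycle ∧ c.length ≤ k ∧ {e | e ∈ c.edges} = E}.ncard

/-! ### Minors across a bridge -/

section Minors

variable {α β γ : Type*} {K : SimpleGraph α} {G G' : SimpleGraph β} {f : α → Set β}
  {A S : Set β} {u v : β}

/-- The sets `f a` are the branch sets of a model of `K` as a minor of `G`. -/
structure IsMinorModel (K : SimpleGraph α) (G : SimpleGraph β) (f : α → Set β) : Prop where
  connected : ∀ a, (G.induce (f a)).Connected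
  disjoint : ∀ a b, a ≠ b → Disjoint (f a) (f b)
  exists_adj : ∀ a b, K.Adj a b → ∃ x ∈ f a, ∃ y ∈ f b, G.Adj x y

theorem isMinor_iff_exists_isMinorModel : IsMinor K G ↔ ∃ f, IsMinorModel K G f :=
  ⟨fun ⟨f, hconn, hdisj, hadj⟩ => ⟨f, hconn, hdisj, hadj⟩,
    fun ⟨f, hf⟩ => ⟨f, hf.connected, hf.disjoint, hf.exists_adj⟩⟩

theorem IsMinorModel.nonempty (hf : IsMinorModel K G f) (a : α) : (f a).Nonempty :=
  Set.nonempty_coe_sort.1 (hf.connected a).nonempty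

theorem IsMinorModel.eq_of_mem (hf : IsMinorModel K G f) {a b : α} {x : β} (ha : x ∈ f a)
    (hb : x ∈ f b) : a = b :=
  by_contra fun hab => Set.disjoint_left.1 (hf.disjoint a b hab) ha hb

theorem IsMinor.mono (hle : G ≤ G') (hm : IsMinor K G) : IsMinor K G' := by
  obtain ⟨f, hconn, hdisj, hadj⟩ := hm
  refine ⟨f, fun a => (hconn a).mono fun _ _ hxy => hle hxy, hdisj, fun a b hab => ?_⟩
  obtain ⟨x, hx, y, hy, hxy⟩ := hadj a b hab
  exact ⟨x, hx, y, hy, hle hxy⟩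

theorem connected_induce_image {L : SimpleGraph γ} (r : β → γ)
    (hr : ∀ x y, G.Adj x y → r x = r y ∨ L.Adj (r x) (r y)) (hA : (G.induce A).Connected) :
    (L.induce (r '' A)).Connected := by
  have : Nonempty (r '' A) := (Set.nonempty_coe_sort.1 hA.nonempty).image r |>.to_subtype
  refine ⟨?_⟩
  rintro ⟨_, x, hx, rfl⟩ ⟨_, y, hy, rfl⟩
  have hxy := hA.preconnected ⟨x, hx⟩ ⟨y, hy⟩
  rw [reachable_iff_reflTransGen] at hxy ⊢
  refine hxy.lift' (fun z : A => (⟨r z, Set.mem_image_of_mem r z.2⟩ : r '' A)) fun a b hab => ?_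
  rcases hr a b hab with heq | hadj
  · exact Relation.ReflTransGen.refl.trans (by simp only [heq]; rfl)
  · exact .single hadj

/-- At most one edge of `G` joins `S` to its complement, namely the one from `u ∈ S` to `v ∉ S`. -/
structure IsBridgeCut (G : SimpleGraph β) (S : Set β) (u v : β) : Prop where
  left_mem : u ∈ S
  right_notMem : v ∉ S
  eq_of_adj : ∀ ⦃x y⦄, x ∈ S → y ∉ S → G.Adj x y → x = u ∧ y = v

theorem IsBridgeCut.compl (hS : IsBridgeCut G S u v) : IsBridgeCut G Sᶜ v u where
  left_mem := hS.right_notMem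
  right_notMem := Set.notMem_compl_iff.2 hS.left_mem
  eq_of_adj _ _ hx hy hxy := (hS.eq_of_adj (Set.notMem_compl_iff.1 hy) hx hxy.symm).symm

theorem isBridgeCut_sup_edge (huv : ¬ G.Reachable u v) :
    IsBridgeCut (G ⊔ edge u v) {x | G.Reachable u x} u v where
  left_mem := Reachable.refl u
  right_notMem := huv
  eq_of_adj x y hx hy hxy := by
    rw [sup_adj, edge_adj] at hxy
    rcases hxy with hxy | ⟨hxy | ⟨rfl, -⟩, -⟩
    · exact absurd (hx.trans hxy.reachable) hy
    · exact hxy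
    · exact absurd hx huv

theorem IsBridgeCut.ends_mem (hS : IsBridgeCut G S u v) (hA : (G.induce A).Connected)
    (hAS : (A ∩ S).Nonempty) (hASc : ¬ A ⊆ S) : u ∈ A ∧ v ∈ A := by
  obtain ⟨p, hp, hpS⟩ := hAS
  obtain ⟨q, hq, hqS⟩ := Set.not_subset.1 hASc
  obtain ⟨w⟩ := hA.preconnected ⟨p, hp⟩ ⟨q, hq⟩
  obtain ⟨d, -, hd₁, hd₂⟩ := w.exists_boundary_dart (Subtype.val ⁻¹' S) hpS hqS
  obtain ⟨rfl, rfl⟩ := hS.eq_of_adj hd₁ hd₂ d.adj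
  exact ⟨d.fst.2, d.snd.2⟩

open Classical in
/-- The retraction onto `S` that sends every vertex outside `S` to `u`. Across a bridge cut at `u`
it contracts the far side of the bridge. -/
noncomputable def sideRetraction (S : Set β) (u : β) : β → β :=
  S.piecewise id fun _ => u

theorem sideRetraction_of_mem {x : β} (hx : x ∈ S) : sideRetraction S u x = x := by
  simp only [sideRetraction, hx, Set.piecewise_eq_of_mem, id]

theorem sideRetraction_of_notMem {x : β} (hx : x ∉ S) : sideRetraction S u x = u := by
  simp only [sideRetraction, hx, not_false_eq_true, Set.piecewise_eq_of_notMem]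

theorem IsBridgeCut.sideRetraction_eq_or_adj (hS : IsBridgeCut G S u v) {x y : β}
    (hxy : G.Adj x y) : sideRetraction S u x = sideRetraction S u y ∨
      (G \ edge u v).Adj (sideRetraction S u x) (sideRetraction S u y) := by
  by_cases hx : x ∈ S <;> by_cases hy : y ∈ S
  · have hnot : ¬ (edge u v).Adj x y := by
      rintro he
      rw [edge_adj] at he
      rcases he.1 with ⟨-, rfl⟩ | ⟨rfl, -⟩
      exacts [hS.right_notMem hy, hS.right_notMem hx]
    rw [sideRetraction_of_mem hx, sideRetraction_of_mem hy]
    exact .inr ⟨hxy, hnot⟩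
  · rw [sideRetraction_of_mem hx, sideRetraction_of_notMem hy]
    exact .inl (hS.eq_of_adj hx hy hxy).1
  · rw [sideRetraction_of_notMem hx, sideRetraction_of_mem hy]
    exact .inl (hS.eq_of_adj hy hx hxy.symm).1.symm
  · rw [sideRetraction_of_notMem hx, sideRetraction_of_notMem hy]
    exact .inl rfl

theorem IsBridgeCut.sideRetraction_mem (hS : IsBridgeCut G S u v) (hA : (G.induce A).Connected)
    (hAS : (A ∩ S).Nonempty) {x : β} (hx : x ∈ A) : sideRetraction S u x ∈ A ∩ S := by
  by_cases hxS : x ∈ S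
  · rw [sideRetraction_of_mem hxS]
    exact ⟨hx, hxS⟩
  · rw [sideRetraction_of_notMem hxS]
    exact ⟨(hS.ends_mem hA hAS fun hsub => hxS (hsub hx)).1, hS.left_mem⟩

theorem IsBridgeCut.image_sideRetraction (hS : IsBridgeCut G S u v)
    (hA : (G.induce A).Connected) (hAS : (A ∩ S).Nonempty) :
    sideRetraction S u '' A = A ∩ S :=
  Set.Subset.antisymm (Set.image_subset_iff.2 fun _ hx => hS.sideRetraction_mem hA hAS hx)
    fun x hx => ⟨x, hx.1, sideRetraction_of_mem hx.2⟩

theorem IsBridgeCut.isMinorModel_inter (hS : IsBridgeCut G S u v) (hf : IsMinorModel K G f)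
    (hmeet : ∀ a, (f a ∩ S).Nonempty) : IsMinorModel K (G \ edge u v) fun a => f a ∩ S where
  connected a := by
    rw [← hS.image_sideRetraction (hf.connected a) (hmeet a)]
    exact connected_induce_image _ (fun _ _ => hS.sideRetraction_eq_or_adj) (hf.connected a)
  disjoint a b hab := (hf.disjoint a b hab).mono Set.inter_subset_left Set.inter_subset_left
  exists_adj a b hab := by
    obtain ⟨x, hx, y, hy, hxy⟩ := hf.exists_adj a b hab
    have hrx := hS.sideRetraction_mem (hf.connected a) (hmeet a) hx
    have hry := hS.sideRetraction_mem (hf.connected b) (hmeet b) hy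
    refine ⟨_, hrx, _, hry, (hS.sideRetraction_eq_or_adj hxy).resolve_left fun heq => ?_⟩
    exact hab.ne (hf.eq_of_mem hrx.1 (heq ▸ hry.1))

/-- 2-connectedness: there are at least three vertices, and deleting any one of them leaves the
graph connected. The first condition is encoded as the existence of a vertex avoiding two given
ones, which admits the graph without vertices as a degenerate case. -/
structure IsTwoConnected (K : SimpleGraph α) : Prop where
  exists_ne_ne : ∀ a b : α, ∃ c, c ≠ a ∧ c ≠ b
  preconnected_induce_compl : ∀ w, (K.induce {w}ᶜ).Preconnected

theorem isTwoConnected_of_adj_or_exists_common_neighbor (hthree : ∀ a b : α, ∃ c, c ≠ a ∧ c ≠ b)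
    (hK : ∀ w x y, x ≠ w → y ≠ w → x ≠ y →
      K.Adj x y ∨ ∃ z, z ≠ w ∧ K.Adj x z ∧ K.Adj z y) : IsTwoConnected K where
  exists_ne_ne := hthree
  preconnected_induce_compl w := by
    rintro ⟨x, hx⟩ ⟨y, hy⟩
    by_cases hxy : x = y
    · subst hxy
      exact Reachable.refl _
    rcases hK w x y hx hy hxy with hadj | ⟨z, hz, hxz, hzy⟩
    · exact Adj.reachable (G := K.induce {w}ᶜ) hadj
    · exact (Adj.reachable (G := K.induce {w}ᶜ) (u := ⟨x, hx⟩) (v := ⟨z, hz⟩) hxz).trans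
        (Adj.reachable hzy)

theorem isTwoConnected_completeGraph (hthree : ∀ a b : α, ∃ c, c ≠ a ∧ c ≠ b) :
    IsTwoConnected (completeGraph α) :=
  isTwoConnected_of_adj_or_exists_common_neighbor hthree fun _ _ _ _ _ hxy => .inl hxy

theorem isTwoConnected_completeBipartiteGraph_three :
    IsTwoConnected (completeBipartiteGraph (Fin 3) (Fin 3)) :=
  isTwoConnected_of_adj_or_exists_common_neighbor (by decide) (by
    simp only [completeBipartiteGraph_adj]
    decide)

theorem IsBridgeCut.right_mem_of_adj (hS : IsBridgeCut G S u v) (hf : IsMinorModel K G f)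
    {a b : α} (ha : f a ⊆ S) (hb : ¬ f b ⊆ S) (hab : K.Adj a b) : v ∈ f b := by
  obtain ⟨x, hx, y, hy, hxy⟩ := hf.exists_adj a b hab
  by_cases hyS : y ∈ S
  · exact (hS.ends_mem (hf.connected b) ⟨y, hy, hyS⟩ hb).2
  · exact (hS.eq_of_adj (ha hx) hyS hxy).2 ▸ hy

theorem IsBridgeCut.subset_of_ne (hS : IsBridgeCut G S u v) (hK : IsTwoConnected K)
    (hf : IsMinorModel K G f) {b w y : α} (hv : ∀ z ≠ w, v ∉ f z) (hb : f b ⊆ S) (hbw : b ≠ w)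
    (hyw : y ≠ w) : f y ⊆ S := by
  by_contra hy
  obtain ⟨p⟩ := hK.preconnected_induce_compl w ⟨b, hbw⟩ ⟨y, hyw⟩
  obtain ⟨d, -, hd₁, hd₂⟩ := p.exists_boundary_dart {z | f z ⊆ S} hb hy
  exact hv d.snd d.snd.2 (hS.right_mem_of_adj hf hd₁ hd₂ d.adj)

theorem IsBridgeCut.subsingleton_not_subset (hS : IsBridgeCut G S u v) (hK : IsTwoConnected K)
    (hf : IsMinorModel K G f) {b : α} (hb : f b ⊆ S) : {y | ¬ f y ⊆ S}.Subsingleton := by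
  have hne : ∀ {y}, ¬ f y ⊆ S → b ≠ y := fun hy hby => hy (hby ▸ hb)
  intro y hy y' hy'
  by_contra hyy'
  by_cases hv : ∃ w, v ∈ f w
  · obtain ⟨w, hw⟩ := hv
    have hvw : ∀ z ≠ w, v ∉ f z := fun z hz hvz => hz (hf.eq_of_mem hvz hw)
    have hbw : b ≠ w := fun hbw => hS.right_notMem (hb (hbw ▸ hw))
    have heq : ∀ z, ¬ f z ⊆ S → z = w := fun z hz =>
      by_contra fun hzw => hz (hS.subset_of_ne hK hf hvw hb hbw hzw)
    exact hyy' ((heq y hy).trans (heq y' hy').symm)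
  · exact hy' (hS.subset_of_ne hK hf (fun z _ hz => hv ⟨z, hz⟩) hb (hne hy) (Ne.symm hyy'))

theorem IsBridgeCut.forall_meets_or_forall_meets_compl (hS : IsBridgeCut G S u v)
    (hK : IsTwoConnected K) (hf : IsMinorModel K G f) :
    (∀ a, (f a ∩ S).Nonempty) ∨ ∀ a, (f a ∩ Sᶜ).Nonempty := by
  by_contra! ⟨⟨a, ha⟩, ⟨b, hb⟩⟩
  have haS : f a ⊆ Sᶜ := Set.disjoint_iff_inter_eq_empty.2 ha |>.subset_compl_right
  have hbS : f b ⊆ S := Set.sdiff_eq_empty.1 hb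
  have hsep : ∀ c, f c ⊆ S → ¬ f c ⊆ Sᶜ := fun c hcS hcSc =>
    let ⟨_, hx⟩ := hf.nonempty c
    hcSc hx (hcS hx)
  obtain ⟨c, hca, hcb⟩ := hK.exists_ne_ne a b
  have hcS : f c ⊆ S := by
    by_contra hc
    exact hca (hS.subsingleton_not_subset hK hf hbS hc fun h => hsep a h haS)
  have hcSc : f c ⊆ Sᶜ := by
    by_contra hc
    exact hcb (hS.compl.subsingleton_not_subset hK hf haS hc (hsep b hbS))
  exact hsep c hcS hcSc

theorem IsMinor.sdiff_edge_of_isBridgeCut (hm : IsMinor K G) (hK : IsTwoConnected K)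
    (hS : IsBridgeCut G S u v) : IsMinor K (G \ edge u v) := by
  obtain ⟨f, hf⟩ := isMinor_iff_exists_isMinorModel.1 hm
  refine isMinor_iff_exists_isMinorModel.2 ?_
  rcases hS.forall_meets_or_forall_meets_compl hK hf with hmeet | hmeet
  · exact ⟨_, hS.isMinorModel_inter hf hmeet⟩
  · rw [edge_comm]
    exact ⟨_, hS.compl.isMinorModel_inter hf hmeet⟩

theorem sup_edge_sdiff_edge (huv : ¬ G.Reachable u v) : (G ⊔ edge u v) \ edge u v = G := by
  rw [sup_sdiff_right_self, sdiff_edge _ fun hadj => huv hadj.reachable]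

theorem IsMinor.of_sup_edge (hK : IsTwoConnected K) (huv : ¬ G.Reachable u v)
    (hm : IsMinor K (G ⊔ edge u v)) : IsMinor K G :=
  sup_edge_sdiff_edge huv ▸ hm.sdiff_edge_of_isBridgeCut hK (isBridgeCut_sup_edge huv)

end Minors

/-! ### Counting in bridge-addable classes -/

section Counting

variable {V W : Type*} {𝒜 : Set (SimpleGraph V)}

/-- A class of graphs on `V` is bridge-addable if joining two components of a member by an edge
gives a member. -/
def IsBridgeAddable (𝒜 : Set (SimpleGraph V)) : Prop :=
  ∀ ⦃G⦄, G ∈ 𝒜 → ∀ ⦃u v⦄, ¬ G.Reachable u v → G ⊔ edge u v ∈ 𝒜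

/-- The members of the class `𝒜` with exactly `m` edges; `planarSet n m` is the case of planar
graphs on `Fin n`. -/
def edgeLevel (𝒜 : Set (SimpleGraph V)) (m : ℕ) : Set (SimpleGraph V) :=
  {G | G ∈ 𝒜 ∧ edgeCount G = m}

theorem isLowerSet_isPlanar : IsLowerSet {G : SimpleGraph V | IsPlanar G} :=
  fun _ _ hle hG => ⟨fun hm => hG.1 (hm.mono hle), fun hm => hG.2 (hm.mono hle)⟩

theorem isBridgeAddable_isPlanar : IsBridgeAddable {G : SimpleGraph V | IsPlanar G} :=
  fun _ hG _ _ huv =>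
    ⟨fun hm => hG.1 (hm.of_sup_edge (isTwoConnected_completeGraph (by decide)) huv),
      fun hm => hG.2 (hm.of_sup_edge isTwoConnected_completeBipartiteGraph_three huv)⟩

theorem sum_ncard_comm {α β : Type*} [Finite α] [Fintype β] (s : Set α) (r : α → β → Prop) :
    ∑ a ∈ s.toFinite.toFinset, {b | r a b}.ncard = ∑ b, {a ∈ s | r a b}.ncard := by
  classical
  have hcount := Finset.sum_card_bipartiteAbove_eq_sum_card_bipartiteBelow r
    (s := s.toFinite.toFinset) (t := Finset.univ)
  simp only [← Set.ncard_coe_finset, Finset.coe_bipartiteAbove, Finset.coe_bipartiteBelow] at hcount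
  simpa only [Finset.mem_univ, true_and, Set.Finite.mem_toFinset] using hcount

theorem edgeCount_mono [Finite V] {F G : SimpleGraph V} (hle : F ≤ G) :
    edgeCount F ≤ edgeCount G :=
  Set.ncard_le_ncard (edgeSet_mono hle)

theorem edgeCount_sdiff [Finite V] {F G : SimpleGraph V} (hle : F ≤ G) :
    edgeCount (G \ F) = edgeCount G - edgeCount F := by
  rw [edgeCount, edgeSet_sdiff, Set.ncard_sdiff (edgeSet_mono hle)]
  rfl

theorem edgeCount_map (H : SimpleGraph W) (f : W ↪ V) : edgeCount (H.map f) = edgeCount H := by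
  rw [edgeCount, edgeSet_map, Set.ncard_image_of_injective _ f.sym2Map.injective]
  rfl

theorem edgeCount_sup_edge [Finite V] {G : SimpleGraph V} {u v : V} (hne : u ≠ v)
    (huv : ¬ G.Adj u v) : edgeCount (G ⊔ edge u v) = edgeCount G + 1 := by
  rw [edgeCount, edgeSet_sup, edgeSet_edge_of_ne hne, Set.union_singleton,
    Set.ncard_insert_of_notMem (by rwa [mem_edgeSet])]
  rfl

theorem sum_vertexDegree [Fintype V] (G : SimpleGraph V) :
    ∑ v, vertexDegree G v = 2 * edgeCount G := by
  classical
  simp only [vertexDegree, edgeCount, Set.ncard_eq_toFinset_card']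
  exact G.sum_degrees_eq_twice_card_edges

theorem card_le_ncard_not_reachable_add [Finite V] (G : SimpleGraph V) (u : V) :
    Nat.card V ≤ {v | ¬ G.Reachable u v}.ncard + (edgeCount G + 1) := by
  set C := G.connectedComponentMk u with hC
  have hcompl : {v | ¬ G.Reachable u v} = C.suppᶜ := by
    ext v
    simp only [hC, Set.mem_ofPred_eq, Set.mem_compl_iff, ConnectedComponent.mem_supp_iff,
      ConnectedComponent.eq, reachable_comm]
  have hedges : Nat.card C.toSimpleGraph.edgeSet ≤ edgeCount G :=
    Nat.card_le_card_of_injective _ (Embedding.induce (G := G) C.supp).mapEdgeSet.injective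
  have hsupp : C.supp.ncard ≤ edgeCount G + 1 :=
    C.connected_toSimpleGraph.card_vert_le_card_edgeSet_add_one.trans
      (Nat.add_le_add_right hedges 1)
  rw [hcompl, ← Set.ncard_add_ncard_compl C.supp]
  omega

theorem IsBridgeAddable.ncard_not_reachable_le_ncard_adj [Finite V] (h𝒜 : IsBridgeAddable 𝒜)
    (k : ℕ) (u v : V) : {G ∈ edgeLevel 𝒜 k | ¬ G.Reachable u v}.ncard ≤
      {G ∈ edgeLevel 𝒜 (k + 1) | G.Adj u v}.ncard := by
  refine Set.ncard_le_ncard_of_injOn (· ⊔ edge u v) ?_ ?_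
  · rintro G ⟨⟨hG, rfl⟩, huv⟩
    have hne : u ≠ v := fun h => huv (h ▸ Reachable.refl u)
    refine ⟨⟨h𝒜 hG huv, edgeCount_sup_edge hne fun hadj => huv hadj.reachable⟩, ?_⟩
    exact .inr ((edge_adj _ _ _ _).2 ⟨.inl ⟨rfl, rfl⟩, hne⟩)
  · rintro G ⟨-, hG⟩ G' ⟨-, hG'⟩ heq
    rw [← sup_edge_sdiff_edge hG, ← sup_edge_sdiff_edge hG']
    exact congrArg (· \ edge u v) heq

theorem IsBridgeAddable.ncard_mul_le_sum_vertexDegree [Finite V] (h𝒜 : IsBridgeAddable 𝒜)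
    (k : ℕ) (u : V) : (edgeLevel 𝒜 k).ncard * (Nat.card V - (k + 1)) ≤
      ∑ G ∈ (edgeLevel 𝒜 (k + 1)).toFinite.toFinset, vertexDegree G u := by
  have := Fintype.ofFinite V
  calc (edgeLevel 𝒜 k).ncard * (Nat.card V - (k + 1))
      = ∑ _G ∈ (edgeLevel 𝒜 k).toFinite.toFinset, (Nat.card V - (k + 1)) := by
        rw [Finset.sum_const, smul_eq_mul, Set.ncard_eq_toFinset_card]
    _ ≤ ∑ G ∈ (edgeLevel 𝒜 k).toFinite.toFinset, {v | ¬ G.Reachable u v}.ncard := by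
        refine Finset.sum_le_sum fun G hG => Nat.sub_le_iff_le_add.2 ?_
        exact ((Set.Finite.mem_toFinset _).1 hG).2 ▸ card_le_ncard_not_reachable_add G u
    _ = ∑ v, {G ∈ edgeLevel 𝒜 k | ¬ G.Reachable u v}.ncard := sum_ncard_comm _ _
    _ ≤ ∑ v, {G ∈ edgeLevel 𝒜 (k + 1) | G.Adj u v}.ncard :=
        Finset.sum_le_sum fun v _ => h𝒜.ncard_not_reachable_le_ncard_adj k u v
    _ = ∑ G ∈ (edgeLevel 𝒜 (k + 1)).toFinite.toFinset, vertexDegree G u :=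
        (sum_ncard_comm _ _).symm

theorem IsBridgeAddable.card_mul_ncard_mul_le [Finite V] (h𝒜 : IsBridgeAddable 𝒜) (k : ℕ) :
    Nat.card V * ((edgeLevel 𝒜 k).ncard * (Nat.card V - (k + 1))) ≤
      (edgeLevel 𝒜 (k + 1)).ncard * (2 * (k + 1)) := by
  have := Fintype.ofFinite V
  calc Nat.card V * ((edgeLevel 𝒜 k).ncard * (Nat.card V - (k + 1)))
      = ∑ _u : V, (edgeLevel 𝒜 k).ncard * (Nat.card V - (k + 1)) := by
        rw [Finset.sum_const, smul_eq_mul, Finset.card_univ, Nat.card_eq_fintype_card]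
    _ ≤ ∑ u, ∑ G ∈ (edgeLevel 𝒜 (k + 1)).toFinite.toFinset, vertexDegree G u :=
        Finset.sum_le_sum fun u _ => h𝒜.ncard_mul_le_sum_vertexDegree k u
    _ = ∑ G ∈ (edgeLevel 𝒜 (k + 1)).toFinite.toFinset, 2 * edgeCount G := by
        rw [Finset.sum_comm]
        simp only [sum_vertexDegree]
    _ = (edgeLevel 𝒜 (k + 1)).ncard * (2 * (k + 1)) := by
        rw [Set.ncard_eq_toFinset_card]
        refine Finset.sum_const_nat fun G hG => ?_
        rw [((Set.Finite.mem_toFinset _).1 hG).2]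

theorem IsBridgeAddable.ncard_edgeLevel_mul_le [Finite V] (h𝒜 : IsBridgeAddable 𝒜) (k : ℕ) :
    (edgeLevel 𝒜 k).ncard * (Nat.card V - (k + 1)) ≤ 2 * (edgeLevel 𝒜 (k + 1)).ncard := by
  rcases lt_or_ge (Nat.card V) (k + 1) with hlt | hge
  · simp only [Nat.sub_eq_zero_of_le hlt.le, mul_zero, zero_le]
  · refine Nat.le_of_mul_le_mul_left ?_ (Nat.succ_pos k |>.trans_le hge)
    calc Nat.card V * ((edgeLevel 𝒜 k).ncard * (Nat.card V - (k + 1)))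
        ≤ (edgeLevel 𝒜 (k + 1)).ncard * (2 * (k + 1)) := h𝒜.card_mul_ncard_mul_le k
      _ ≤ (edgeLevel 𝒜 (k + 1)).ncard * (2 * Nat.card V) := by gcongr
      _ = Nat.card V * (2 * (edgeLevel 𝒜 (k + 1)).ncard) := by ring

theorem IsBridgeAddable.ncard_edgeLevel_mul_pow_le [Finite V] (h𝒜 : IsBridgeAddable 𝒜)
    (k j : ℕ) : (edgeLevel 𝒜 k).ncard * (Nat.card V - (k + j)) ^ j ≤
      2 ^ j * (edgeLevel 𝒜 (k + j)).ncard := by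
  induction j with
  | zero => simp
  | succ j ih =>
    calc (edgeLevel 𝒜 k).ncard * (Nat.card V - (k + (j + 1))) ^ (j + 1)
        = (edgeLevel 𝒜 k).ncard * (Nat.card V - (k + (j + 1))) ^ j *
            (Nat.card V - (k + j + 1)) := by
          rw [pow_succ, mul_assoc, add_assoc]
      _ ≤ (edgeLevel 𝒜 k).ncard * (Nat.card V - (k + j)) ^ j * (Nat.card V - (k + j + 1)) := by
          gcongr
          omega
      _ ≤ 2 ^ j * (edgeLevel 𝒜 (k + j)).ncard * (Nat.card V - (k + j + 1)) := by gcongr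
      _ = 2 ^ j * ((edgeLevel 𝒜 (k + j)).ncard * (Nat.card V - (k + j + 1))) := by ring
      _ ≤ 2 ^ j * (2 * (edgeLevel 𝒜 (k + j + 1)).ncard) :=
          Nat.mul_le_mul_left _ (h𝒜.ncard_edgeLevel_mul_le (k + j))
      _ = 2 ^ (j + 1) * (edgeLevel 𝒜 (k + (j + 1))).ncard := by
          rw [pow_succ, mul_assoc, add_assoc]

theorem edgeCount_le_of_isContained [Finite V] {H : SimpleGraph W} {G : SimpleGraph V}
    (hHG : H ⊑ G) : edgeCount H ≤ edgeCount G := by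
  obtain ⟨f⟩ := hHG
  rw [← edgeCount_map H f.toEmbedding]
  exact edgeCount_mono ((map_le_iff_le_comap _ _ _).2 fun _ _ hab => f.toHom.map_adj hab)

/-- A graph containing `H` is recovered from the position of a copy of `H` and the graph that is
left after deleting the edges of that copy. -/
theorem ncard_isContained_le [Finite V] [Finite W] (h𝒜 : IsLowerSet 𝒜) (H : SimpleGraph W)
    (k : ℕ) : {G ∈ edgeLevel 𝒜 (k + edgeCount H) | H ⊑ G}.ncard ≤
      (edgeLevel 𝒜 k).ncard * Nat.card V ^ Nat.card W := by
  have hsub : {G ∈ edgeLevel 𝒜 (k + edgeCount H) | H ⊑ G} ⊆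
      (fun p : SimpleGraph V × (W → V) => p.1 ⊔ H.map p.2) '' (edgeLevel 𝒜 k ×ˢ Set.univ) := by
    rintro G ⟨⟨hG, hcount⟩, ⟨f⟩⟩
    have hle : H.map f.toEmbedding ≤ G :=
      (map_le_iff_le_comap _ _ _).2 fun _ _ hab => f.toHom.map_adj hab
    refine ⟨(G \ H.map f.toEmbedding, f), ⟨⟨h𝒜 sdiff_le hG, ?_⟩, Set.mem_univ _⟩,
      sdiff_sup_cancel hle⟩
    rw [edgeCount_sdiff hle, edgeCount_map, hcount, Nat.add_sub_cancel]
  calc {G ∈ edgeLevel 𝒜 (k + edgeCount H) | H ⊑ G}.ncard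
      ≤ (edgeLevel 𝒜 k ×ˢ (Set.univ : Set (W → V))).ncard :=
        (Set.ncard_le_ncard hsub).trans Set.ncard_image_le
    _ = (edgeLevel 𝒜 k).ncard * Nat.card V ^ Nat.card W := by
        rw [Set.ncard_prod, Set.ncard_univ, Nat.card_fun]

theorem IsBridgeAddable.ncard_isContained_mul_pow_le [Finite V] [Finite W]
    (h𝒜 : IsBridgeAddable 𝒜) (hlower : IsLowerSet 𝒜) (H : SimpleGraph W) (m : ℕ) :
    {G ∈ edgeLevel 𝒜 m | H ⊑ G}.ncard * (Nat.card V - m) ^ edgeCount H ≤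
      2 ^ edgeCount H * Nat.card V ^ Nat.card W * (edgeLevel 𝒜 m).ncard := by
  rcases lt_or_ge m (edgeCount H) with hlt | hge
  · have hempty : {G ∈ edgeLevel 𝒜 m | H ⊑ G} = ∅ :=
      Set.eq_empty_of_forall_notMem fun G ⟨⟨_, hG⟩, hHG⟩ =>
        (hG ▸ edgeCount_le_of_isContained hHG).not_gt hlt
    simp only [hempty, Set.ncard_empty, zero_mul, zero_le]
  · obtain ⟨k, rfl⟩ := Nat.exists_eq_add_of_le' hge
    calc {G ∈ edgeLevel 𝒜 (k + edgeCount H) | H ⊑ G}.ncard *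
          (Nat.card V - (k + edgeCount H)) ^ edgeCount H
        ≤ (edgeLevel 𝒜 k).ncard * Nat.card V ^ Nat.card W *
            (Nat.card V - (k + edgeCount H)) ^ edgeCount H := by
          gcongr
          exact ncard_isContained_le hlower H k
      _ = Nat.card V ^ Nat.card W *
            ((edgeLevel 𝒜 k).ncard * (Nat.card V - (k + edgeCount H)) ^ edgeCount H) := by ring
      _ ≤ Nat.card V ^ Nat.card W *
            (2 ^ edgeCount H * (edgeLevel 𝒜 (k + edgeCount H)).ncard) :=
          Nat.mul_le_mul_left _ (h𝒜.ncard_edgeLevel_mul_pow_le k _)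
      _ = 2 ^ edgeCount H * Nat.card V ^ Nat.card W *
            (edgeLevel 𝒜 (k + edgeCount H)).ncard := by ring

theorem IsBridgeAddable.ncard_isContained_div_le [Finite V] [Finite W] (h𝒜 : IsBridgeAddable 𝒜)
    (hlower : IsLowerSet 𝒜) (H : SimpleGraph W) {m : ℕ} (hm : m < Nat.card V) :
    ({G ∈ edgeLevel 𝒜 m | H ⊑ G}.ncard : ℝ) / (edgeLevel 𝒜 m).ncard ≤
      2 ^ edgeCount H * ((Nat.card V : ℝ) ^ Nat.card W / (Nat.card V - m : ℝ) ^ edgeCount H) := by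
  have hd : (0 : ℝ) < (Nat.card V : ℝ) - m := sub_pos.2 (Nat.cast_lt.2 hm)
  have hcount : ({G ∈ edgeLevel 𝒜 m | H ⊑ G}.ncard : ℝ) *
      (Nat.card V - m : ℝ) ^ edgeCount H ≤
      2 ^ edgeCount H * (Nat.card V : ℝ) ^ Nat.card W * (edgeLevel 𝒜 m).ncard := by
    rw [← Nat.cast_sub hm.le]
    exact_mod_cast h𝒜.ncard_isContained_mul_pow_le hlower H m
  refine div_le_of_le_mul₀ (Nat.cast_nonneg _) (by positivity) ?_
  rw [← mul_div_assoc, div_mul_eq_mul_div, le_div_iff₀ (by positivity)]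
  exact hcount

end Counting

/-! ### The limit -/

theorem tendsto_pow_div_pow_zero {ι : Type*} {l : Filter ι} {a d : ι → ℝ} (ha : ∀ i, 0 ≤ a i)
    {p q : ℕ} (hq : q ≠ 0) (hd : Tendsto (fun i => d i / a i ^ ((p : ℝ) / (q : ℝ))) l atTop) :
    Tendsto (fun i => a i ^ p / d i ^ q) l (nhds 0) := by
  refine ((tendsto_pow_atTop hq).comp hd).inv_tendsto_atTop.congr fun i => ?_
  have hpow : (a i ^ ((p : ℝ) / (q : ℝ))) ^ q = a i ^ p := by
    rw [← Real.rpow_natCast, ← Real.rpow_mul (ha i), div_mul_cancel₀ _ (Nat.cast_ne_zero.2 hq),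
      Real.rpow_natCast]
  simp only [Pi.inv_apply, Function.comp_apply, div_pow, hpow, inv_div]

theorem isContained_iff_exists_injective {V W : Type*} {H : SimpleGraph W} {G : SimpleGraph V} :
    H ⊑ G ↔ ∃ f : W → V, Function.Injective f ∧ ∀ i j, H.Adj i j → G.Adj (f i) (f j) :=
  ⟨fun ⟨f⟩ => ⟨f, f.injective, fun _ _ hij => f.toHom.map_adj hij⟩,
    fun ⟨f, hf, hadj⟩ => ⟨⟨⟨f, fun {i j} => hadj i j⟩, hf⟩⟩⟩

theorem multicyclic_subgraph_whp_zero_general {W : Type*} [Finite W] (H : SimpleGraph W)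
    (hH : edgeCount H ≠ 0) (𝒜 : ∀ n : ℕ, Set (SimpleGraph (Fin n)))
    (hadd : ∀ n, IsBridgeAddable (𝒜 n)) (hlower : ∀ n, IsLowerSet (𝒜 n)) (m : ℕ → ℕ)
    (hd : Tendsto
      (fun n : ℕ => ((n : ℝ) - (m n : ℝ)) / (n : ℝ) ^ ((Nat.card W : ℝ) / (edgeCount H : ℝ)))
      atTop atTop) :
    Tendsto (fun n : ℕ => ({G ∈ edgeLevel (𝒜 n) (m n) | H ⊑ G}.ncard : ℝ) /
      (edgeLevel (𝒜 n) (m n)).ncard) atTop (nhds 0) := by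
  have hlim := (tendsto_pow_div_pow_zero (fun n => Nat.cast_nonneg n) hH hd).const_mul
    ((2 : ℝ) ^ edgeCount H)
  rw [mul_zero] at hlim
  refine squeeze_zero' (.of_forall fun n => by positivity) ?_ hlim
  filter_upwards [hd.eventually_gt_atTop 0] with n hn
  have hscale : (0 : ℝ) ≤ (n : ℝ) ^ ((Nat.card W : ℝ) / (edgeCount H : ℝ)) := by positivity
  have hmn : m n < n := Nat.cast_lt.1 (sub_pos.1 (pos_of_mul_pos_left hn (inv_nonneg.2 hscale)))
  simpa only [Nat.card_fin] using
    (hadd n).ncard_isContained_div_le (hlower n) H (hmn.trans_eq (Nat.card_fin n).symm)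

theorem multicyclic_subgraph_whp_zero (h : ℕ) (H : SimpleGraph (Fin h))
    (hconn : H.Connected) (hplanar : IsPlanar H) (hmulti : h < edgeCount H) (m : ℕ → ℕ)
    (hpos : ∀ n : ℕ, 0 < n → m n < n)
    (hd : Tendsto
      (fun n : ℕ => ((n : ℝ) - (m n : ℝ)) / (n : ℝ) ^ ((h : ℝ) / (edgeCount H : ℝ)))
      atTop atTop) :
    Tendsto (fun n : ℕ =>
        planarProb n (m n) fun G =>
          ∃ f : Fin h → Fin n, Function.Injective f ∧ ∀ i j, H.Adj i j → G.Adj (f i) (f j))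
      atTop (nhds 0) := by
  simpa only [planarProb, planarSet, edgeLevel, Set.mem_ofPred_eq,
    isContained_iff_exists_injective] using
    multicyclic_subgraph_whp_zero_general H (Nat.ne_zero_of_lt hmulti) _
      (fun _ => isBridgeAddable_isPlanar) (fun _ => isLowerSet_isPlanar) m (by rwa [Nat.card_fin])
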